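/- Let k ≥ 100 and b be integers with 2 ≤ b ≤ k, and let A be a subinterval of [0,1] with μ(A) ≥ 2^{−2^k − k}. Then μ(H_{b,k}(A)) ≤ 2^{−b} · μ(A). -/

import Mathlib

open scoped Classical

/-- `F M N α₁ α₂ x = |#{j : M ≤ j < M+N, α₁ ≤ x_j < α₂} − (α₂ − α₁)·N|`. -/
noncomputable def F (M N : ℕ) (α₁ α₂ : ℝ) (x : ℕ → ℝ) : ℝ :=
  |(((Finset.Ico M (M + N)).filter fun j => α₁ ≤ x j ∧ x j < α₂).card : ℝ) -
    (α₂ - α₁) * N|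

/-- The sequence `({b^j x})_{j ≥ 0}` of fractional parts. -/
noncomputable def bseq (b : ℕ) (x : ℝ) : ℕ → ℝ := fun j => Int.fract ((b : ℝ) ^ j * x)

/-- `N_k^{(b)} = ⌈2^k · log 2 / log b⌉`. -/
noncomputable def Nkb (b k : ℕ) : ℕ := ⌈(2 : ℝ) ^ k * Real.log 2 / Real.log b⌉₊

/-- `n_k^{(b)} = ⌈log₂(N_{k+1}^{(b)} − N_k^{(b)} − 4k)⌉`. -/
noncomputable def nkb (b k : ℕ) : ℕ :=
  ⌈Real.logb 2 ((Nkb b (k + 1) : ℝ) - Nkb b k - 4 * k)⌉₊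

/-- `T_b(k) = ⌈n_k^{(b)} · log 2 / (2 log b)⌉`. -/
noncomputable def Tbk (b k : ℕ) : ℕ :=
  ⌈(nkb b k : ℝ) * Real.log 2 / (2 * Real.log b)⌉₊

/-- The exceptional set `H_{b,k}(A)`. -/
noncomputable def Hset (b k : ℕ) (A : Set ℝ) : Set ℝ :=
  ⋃ (h : ℕ) (_ : 1 ≤ h) (_ : h ≤ Tbk b k) (a : ℕ) (_ : a < b ^ h)
    (ℓ : ℕ) (_ : nkb b k ≤ 2 * ℓ) (_ : ℓ ≤ nkb b k)
    (m : ℕ) (_ : Nkb b k + 4 * k + m * 2 ^ ℓ + 2 ^ (ℓ - 1) ≤ Nkb b (k + 1)),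
    {x ∈ A | 46 * (2 : ℝ) ^ (((ℓ : ℝ) - 1) / 2) * (h : ℝ) ^ (-(3 / 2) : ℝ) *
        Real.sqrt ((nkb b k : ℝ) - ℓ + 1) <
      F (Nkb b k + 4 * k + m * 2 ^ ℓ) (2 ^ (ℓ - 1))
        ((a : ℝ) / (b : ℝ) ^ h) (((a : ℝ) + 1) / (b : ℝ) ^ h) (bseq b x)}

open MeasureTheory

/-- centred indicator of `[a/B,(a+1)/B)` applied to the fractional part -/
noncomputable def gI (B a : ℕ) (y : ℝ) : ℝ :=
  (if (a : ℝ) / B ≤ Int.fract y ∧ Int.fract y < ((a : ℝ) + 1) / B then 1 else 0) - 1 / (B : ℝ)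

noncomputable def GG (B a : ℕ) (t : ℝ) (K : ℕ) (y : ℝ) : ℝ :=
  Real.exp (t * ∑ i ∈ Finset.range K, gI B a ((B : ℝ) ^ i * y))

lemma gI_meas (B a : ℕ) : Measurable (gI B a) := by
  unfold gI
  refine Measurable.sub (Measurable.ite ?_ measurable_const measurable_const) measurable_const
  exact (measurableSet_le measurable_const measurable_fract).inter
    (measurableSet_lt measurable_fract measurable_const)

lemma gI_add_int (B a : ℕ) (y : ℝ) (n : ℤ) : gI B a (y + n) = gI B a y := by
  unfold gI
  rw [Int.fract_add_intCast]

lemma gI_abs (B a : ℕ) (y : ℝ) : |gI B a y| ≤ 2 := by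
  unfold gI
  have h1 : 0 ≤ 1 / (B : ℝ) := by positivity
  have h2 : 1 / (B : ℝ) ≤ 1 := by
    rcases Nat.eq_zero_or_pos B with h | h
    · simp [h]
    · rw [div_le_one (by exact_mod_cast h)]; exact_mod_cast h
  split_ifs <;> rw [abs_le] <;> constructor <;> linarith

lemma GG_meas (B a : ℕ) (t : ℝ) (K : ℕ) : Measurable (GG B a t K) := by
  unfold GG
  refine Real.measurable_exp.comp (Measurable.const_mul ?_ _)
  refine Finset.measurable_sum _ fun i _ => (gI_meas B a).comp (measurable_const_mul _)

lemma GG_periodic (B a : ℕ) (t : ℝ) (K : ℕ) : Function.Periodic (GG B a t K) 1 := by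
  intro y
  unfold GG
  congr 2
  refine Finset.sum_congr rfl fun i _ => ?_
  have : (B : ℝ) ^ i * (y + 1) = (B : ℝ) ^ i * y + ((B ^ i : ℕ) : ℤ) := by
    push_cast; ring
  rw [this, gI_add_int]

lemma GG_bound (B a : ℕ) (t : ℝ) (K : ℕ) (y : ℝ) :
    ‖GG B a t K y‖ ≤ Real.exp (|t| * (K * 2)) := by
  unfold GG
  rw [Real.norm_eq_abs, Real.abs_exp]
  apply Real.exp_le_exp.mpr
  refine (le_abs_self _).trans ?_
  rw [abs_mul]
  refine mul_le_mul_of_nonneg_left ?_ (abs_nonneg _)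
  refine (Finset.abs_sum_le_sum_abs _ _).trans ?_
  refine (Finset.sum_le_card_nsmul _ _ 2 fun i _ => gI_abs _ _ _).trans ?_
  simp

lemma bdd_ii {f : ℝ → ℝ} (hf : Measurable f) {C : ℝ} (hC : ∀ y, ‖f y‖ ≤ C) (c d : ℝ) :
    IntervalIntegrable f volume c d := by
  refine (intervalIntegrable_const (c := C)).mono_fun hf.aestronglyMeasurable ?_
  refine Filter.Eventually.of_forall fun y => ?_
  exact (hC y).trans (le_abs_self C)

lemma scale_int {f : ℝ → ℝ} (hf : Measurable f) {C : ℝ} (hC : ∀ y, ‖f y‖ ≤ C)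
    (hp : Function.Periodic f 1) (B : ℝ) (hB : 0 < B) (c d : ℤ) :
    ∫ y in (c / B)..(d / B), f (B * y) = ((d : ℝ) - c) / B * ∫ y in (0:ℝ)..1, f y := by
  rw [intervalIntegral.integral_comp_mul_left _ hB.ne', mul_div_cancel₀ _ hB.ne',
    mul_div_cancel₀ _ hB.ne']
  have h1 := hp.intervalIntegral_add_zsmul_eq (d - c) c (fun x y => bdd_ii hf hC x y)
  have h2 := hp.intervalIntegral_add_eq c 0
  rw [h2] at h1
  have h3 : (c : ℝ) + (d - c) • (1:ℝ) = d := by simp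
  rw [h3] at h1
  rw [h1]
  simp only [zsmul_eq_mul, smul_eq_mul, zero_add]
  push_cast
  field_simp

lemma GG_succ (B a : ℕ) (t : ℝ) (K : ℕ) (y : ℝ) :
    GG B a t (K + 1) y = Real.exp (t * gI B a y) * GG B a t K (B * y) := by
  unfold GG
  rw [← Real.exp_add, Finset.sum_range_succ']
  congr 1
  rw [pow_zero, one_mul, mul_add, add_comm]
  congr 2
  refine Finset.sum_congr rfl fun i _ => ?_
  congr 1
  ring

lemma GG_int_succ (B a : ℕ) (ha : a < B) (t : ℝ) (K : ℕ) :
    ∫ y in (0:ℝ)..1, GG B a t (K + 1) y =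
      Real.exp (-t / B) * (1 + (Real.exp t - 1) / B) * ∫ y in (0:ℝ)..1, GG B a t K y := by
  have hB : (0:ℝ) < B := by exact_mod_cast (by omega : 0 < B)
  have haB : (a:ℝ) + 1 ≤ B := by exact_mod_cast ha
  have ii := fun c d => bdd_ii (GG_meas B a t (K+1)) (GG_bound B a t (K+1)) c d
  have e1 : ∀ c d : ℝ, ∀ v : ℝ, c ≤ d →
      (∀ y ∈ Set.Ioo c d, Real.exp (t * gI B a y) = v) →
      ∫ y in c..d, GG B a t (K + 1) y = v * ∫ y in c..d, GG B a t K (B * y) := by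
    intro c d v hcd h
    rw [← intervalIntegral.integral_const_mul]
    refine intervalIntegral.integral_congr_Ioo_of_le hcd fun y hy => ?_
    rw [GG_succ, h y hy]
  have sc := fun c d => scale_int (GG_meas B a t K) (GG_bound B a t K) (GG_periodic B a t K) B hB c d
  have ha0 : (0:ℝ) ≤ a / B := by positivity
  have ha1 : (a:ℝ) / B ≤ (a + 1) / B := by gcongr; linarith
  have ha2 : ((a:ℝ) + 1) / B ≤ 1 := by rw [div_le_one hB]; exact haB
  have fr : ∀ y : ℝ, 0 ≤ y → y < 1 → Int.fract y = y := fun y h0 h1 => Int.fract_eq_self.2 ⟨h0, h1⟩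
  have i1 := e1 0 (a / B) (Real.exp (-t / B)) ha0 (by
    intro y hy
    unfold gI
    rw [fr y hy.1.le (by linarith [hy.2]), if_neg (by intro h; linarith [h.1, hy.2])]
    congr 1; ring)
  have i2 := e1 (a / B) ((a + 1) / B) (Real.exp (-t / B) * Real.exp t) ha1 (by
    intro y hy
    unfold gI
    rw [fr y (by linarith [hy.1]) (by linarith [hy.2]), if_pos ⟨hy.1.le, hy.2⟩, ← Real.exp_add]
    congr 1; ring)
  have i3 := e1 ((a + 1) / B) 1 (Real.exp (-t / B)) ha2 (by
    intro y hy
    unfold gI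
    rw [fr y (by linarith [hy.1]) hy.2, if_neg (by intro h; linarith [h.2, hy.1])]
    congr 1; ring)
  have s1 := sc 0 a
  have s2 := sc a (a + 1)
  have s3 := sc (a + 1) B
  push_cast at s1 s2 s3
  rw [zero_div] at s1
  rw [div_self hB.ne'] at s3
  rw [s1] at i1
  rw [s2] at i2
  rw [s3] at i3
  rw [← intervalIntegral.integral_add_adjacent_intervals (ii 0 (a / B)) (ii (a / B) 1),
    ← intervalIntegral.integral_add_adjacent_intervals (ii (a / B) ((a + 1) / B))
      (ii ((a + 1) / B) 1), i1, i2, i3]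
  field_simp
  ring

lemma GG_int_le (B a : ℕ) (ha : a < B) (t : ℝ) (ht : |t| ≤ 1) (K : ℕ) :
    ∫ y in (0:ℝ)..1, GG B a t K y ≤ Real.exp (K * (t ^ 2 / B)) := by
  have hB : (0:ℝ) < B := by exact_mod_cast (by omega : 0 < B)
  induction K with
  | zero => simp [GG]
  | succ K ih =>
    rw [GG_int_succ B a ha]
    have h1 : Real.exp t - 1 ≤ t + t ^ 2 := by
      have := (abs_le.1 (Real.abs_exp_sub_one_sub_id_le ht)).2
      linarith
    have h2 : 1 + (Real.exp t - 1) / B ≤ Real.exp ((t + t ^ 2) / B) := by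
      have := Real.add_one_le_exp ((t + t ^ 2) / B)
      have h3 : (Real.exp t - 1) / B ≤ (t + t ^ 2) / B := by gcongr
      linarith
    have h0 : 0 ≤ ∫ y in (0:ℝ)..1, GG B a t K y :=
      intervalIntegral.integral_nonneg (by norm_num) fun y _ => (Real.exp_pos _).le
    calc _ ≤ Real.exp (-t / B) * Real.exp ((t + t ^ 2) / B) * Real.exp (K * (t ^ 2 / B)) := by
          gcongr
      _ = _ := by
          rw [← Real.exp_add, ← Real.exp_add]
          congr 1
          push_cast
          field_simp
          ring

lemma GG_markov (b h a q e K : ℕ) (hb : 2 ≤ b) (ha : a < b ^ h) (c d : ℤ) (hcd : c ≤ d)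
    (t : ℝ) (ht : |t| ≤ 1) (u : ℝ) :
    (volume.restrict (Set.Ioc ((c:ℝ) / (b:ℝ) ^ q) ((d:ℝ) / (b:ℝ) ^ q))).real
      {x | u ≤ t * ∑ i ∈ Finset.range K, gI (b ^ h) a ((b:ℝ) ^ (q + e + i * h) * x)} ≤
      ((d:ℝ) - c) / (b:ℝ) ^ q * Real.exp (K * (t ^ 2 / (b:ℝ) ^ h) - u) := by
  have hb0 : (0:ℝ) < b := by exact_mod_cast (by omega : 0 < b)
  have hQ : (0:ℝ) < (b:ℝ) ^ q := by positivity
  set B := b ^ h with hBdef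
  have hcdR : (c:ℝ) ≤ d := by exact_mod_cast hcd
  have hle : (c:ℝ) / (b:ℝ) ^ q ≤ (d:ℝ) / (b:ℝ) ^ q := by gcongr
  set f : ℝ → ℝ := fun x => GG B a t K ((b:ℝ) ^ (q + e) * x) with hf
  have fm : Measurable f := (GG_meas B a t K).comp (measurable_const_mul _)
  have hfeq : ∀ x, f x = Real.exp (t * ∑ i ∈ Finset.range K, gI B a ((b:ℝ) ^ (q + e + i * h) * x)) := by
    intro x
    simp only [hf, GG]
    congr 2
    refine Finset.sum_congr rfl fun i _ => ?_
    congr 1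
    rw [hBdef]
    push_cast
    rw [← pow_mul, ← mul_assoc, ← pow_add]
    congr 2
    ring
  have fint : IntervalIntegrable f volume ((c:ℝ) / (b:ℝ) ^ q) ((d:ℝ) / (b:ℝ) ^ q) :=
    bdd_ii fm (fun y => GG_bound B a t K _) _ _
  have key : ∫ x in Set.Ioc ((c:ℝ) / (b:ℝ) ^ q) ((d:ℝ) / (b:ℝ) ^ q), f x =
      ((d:ℝ) - c) / (b:ℝ) ^ q * ∫ y in (0:ℝ)..1, GG B a t K y := by
    rw [← intervalIntegral.integral_of_le hle]
    have := scale_int (GG_meas B a t K) (GG_bound B a t K) (GG_periodic B a t K)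
      ((b:ℝ) ^ (q + e)) (by positivity) (c * (b:ℤ) ^ e) (d * (b:ℤ) ^ e)
    push_cast at this
    have r : ∀ z : ℝ, z * (b:ℝ) ^ e / (b:ℝ) ^ (q + e) = z / (b:ℝ) ^ q := by
      intro z
      rw [pow_add]
      field_simp
    rw [r, r, ← sub_mul, r] at this
    exact this
  have mk := mul_meas_ge_le_integral_of_nonneg
    (μ := volume.restrict (Set.Ioc ((c:ℝ) / (b:ℝ) ^ q) ((d:ℝ) / (b:ℝ) ^ q))) (f := f)
    (Filter.Eventually.of_forall fun x => by
      simp only [hfeq, Pi.zero_apply]; exact (Real.exp_pos _).le)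
    ((intervalIntegrable_iff_integrableOn_Ioc_of_le hle).1 fint) (Real.exp u)
  have seteq : {x | Real.exp u ≤ f x} =
      {x | u ≤ t * ∑ i ∈ Finset.range K, gI B a ((b:ℝ) ^ (q + e + i * h) * x)} := by
    ext x
    simp only [Set.mem_ofPred_eq, hfeq, Real.exp_le_exp]
  rw [key, seteq] at mk
  have gle := GG_int_le B a ha t ht K
  have hnn : 0 ≤ ((d:ℝ) - c) / (b:ℝ) ^ q := div_nonneg (by linarith) hQ.le
  have mk2 := mk.trans (mul_le_mul_of_nonneg_left gle hnn)
  rw [Real.exp_sub, mul_div_assoc', le_div_iff₀ (Real.exp_pos _)]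
  rw [hBdef] at mk2 ⊢
  push_cast at mk2 ⊢
  linarith

lemma tail_bound (b h a q e K : ℕ) (hb : 2 ≤ b) (ha : a < b ^ h) (c d : ℤ) (hcd : c ≤ d)
    (t : ℝ) (ht0 : 0 ≤ t) (ht : t ≤ 1) (u : ℝ) :
    volume {x | x ∈ Set.Ioc ((c:ℝ) / (b:ℝ) ^ q) ((d:ℝ) / (b:ℝ) ^ q) ∧
      u ≤ |∑ i ∈ Finset.range K, gI (b ^ h) a ((b:ℝ) ^ (q + e + i * h) * x)|} ≤
      ENNReal.ofReal (2 * (((d:ℝ) - c) / (b:ℝ) ^ q *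
        Real.exp (K * (t ^ 2 / (b:ℝ) ^ h) - t * u))) := by
  have h1 := GG_markov b h a q e K hb ha c d hcd t (abs_le.2 ⟨by linarith, ht⟩) (t * u)
  have h2 := GG_markov b h a q e K hb ha c d hcd (-t) (abs_le.2 ⟨by linarith, by linarith⟩) (t * u)
  rw [neg_sq] at h2
  set S := Set.Ioc ((c:ℝ) / (b:ℝ) ^ q) ((d:ℝ) / (b:ℝ) ^ q) with hS
  have sub : {x | x ∈ S ∧
      u ≤ |∑ i ∈ Finset.range K, gI (b ^ h) a ((b:ℝ) ^ (q + e + i * h) * x)|} ⊆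
      ({x | t * u ≤ t * ∑ i ∈ Finset.range K, gI (b ^ h) a ((b:ℝ) ^ (q + e + i * h) * x)} ∩ S) ∪
      ({x | t * u ≤ -t * ∑ i ∈ Finset.range K, gI (b ^ h) a ((b:ℝ) ^ (q + e + i * h) * x)} ∩ S) := by
    rintro x ⟨hx, hu⟩
    rcases le_abs.1 hu with h | h
    · left; exact ⟨mul_le_mul_of_nonneg_left h ht0, hx⟩
    · right; refine ⟨?_, hx⟩
      have := mul_le_mul_of_nonneg_left h ht0
      simp only [Set.mem_ofPred_eq]
      linarith
  refine (measure_mono sub).trans ((measure_union_le _ _).trans ?_)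
  rw [two_mul, ENNReal.ofReal_add]
  · have mS : MeasurableSet S := measurableSet_Ioc
    rw [← Measure.restrict_apply' mS, ← Measure.restrict_apply' mS]
    gcongr
    · rw [ENNReal.le_ofReal_iff_toReal_le]
      · exact h1
      · exact measure_ne_top _ _
      · exact measureReal_nonneg.trans h1
    · rw [ENNReal.le_ofReal_iff_toReal_le]
      · exact h2
      · exact measure_ne_top _ _
      · exact measureReal_nonneg.trans h1
  · exact measureReal_nonneg.trans h1
  · exact measureReal_nonneg.trans h1

lemma split_sum (h L : ℕ) (hh : 1 ≤ h) (f : ℕ → ℝ) :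
    ∑ j ∈ Finset.range L, f j =
      ∑ r ∈ Finset.range h, ∑ i ∈ Finset.range ((L - r + h - 1) / h), f (r + i * h) := by
  rw [Finset.sum_sigma']
  refine Finset.sum_nbij' (fun j => ⟨j % h, j / h⟩) (fun p => p.1 + p.2 * h) ?_ ?_ ?_ ?_ ?_
  · intro j hj
    simp only [Finset.mem_range, Finset.mem_sigma] at hj ⊢
    refine ⟨Nat.mod_lt _ hh, ?_⟩
    rw [← Nat.add_one_le_iff, Nat.le_div_iff_mul_le hh]
    have := Nat.mod_add_div j h
    rw [add_mul, mul_comm (j / h)]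
    omega
  · rintro ⟨r, i⟩ hp
    simp only [Finset.mem_range, Finset.mem_sigma] at hp ⊢
    obtain ⟨hr, hi⟩ := hp
    rw [← Nat.add_one_le_iff, Nat.le_div_iff_mul_le hh, add_mul] at hi
    omega
  · intro j hj
    simp only
    rw [mul_comm]
    exact Nat.mod_add_div j h
  · rintro ⟨r, i⟩ hp
    simp only [Finset.mem_range, Finset.mem_sigma] at hp
    simp only [Nat.add_mul_mod_self_right, Nat.mod_eq_of_lt hp.1, Nat.add_mul_div_right _ _ hh,
      Nat.div_eq_of_lt hp.1, zero_add]
  · intro j hj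
    simp only
    rw [mul_comm (j / h), Nat.mod_add_div]

lemma F_eq (b h a M L : ℕ) (x : ℝ) :
    F M L ((a : ℝ) / (b : ℝ) ^ h) (((a : ℝ) + 1) / (b : ℝ) ^ h) (bseq b x) =
      |∑ j ∈ Finset.range L, gI (b ^ h) a ((b:ℝ) ^ (M + j) * x)| := by
  unfold F
  congr 1
  unfold gI bseq
  rw [Finset.sum_sub_distrib, Finset.card_filter, Finset.sum_Ico_eq_sum_range]
  push_cast
  simp only [Finset.sum_const, Finset.card_range, nsmul_eq_mul, add_tsub_cancel_left]
  congr 1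
  ring

lemma piece (b h a q e L : ℕ) (hh : 1 ≤ h) (hb : 2 ≤ b) (ha : a < b ^ h) (c d : ℤ) (hcd : c ≤ d)
    (t : ℝ) (ht0 : 0 ≤ t) (ht : t ≤ 1) (u κ : ℝ) (hκ : (L:ℝ) / h + 1 ≤ κ) :
    volume {x | x ∈ Set.Ioc ((c:ℝ) / (b:ℝ) ^ q) ((d:ℝ) / (b:ℝ) ^ q) ∧
      h * u < F (q + e) L ((a : ℝ) / (b : ℝ) ^ h) (((a : ℝ) + 1) / (b : ℝ) ^ h) (bseq b x)} ≤
      ENNReal.ofReal (h * (2 * (((d:ℝ) - c) / (b:ℝ) ^ q *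
        Real.exp (κ * (t ^ 2 / (b:ℝ) ^ h) - t * u)))) := by
  have hb0 : (0:ℝ) < b := by exact_mod_cast (by omega : 0 < b)
  have hh0 : (0:ℝ) < h := by exact_mod_cast hh
  have hcdR : (c:ℝ) ≤ d := by exact_mod_cast hcd
  have hnn : 0 ≤ ((d:ℝ) - c) / (b:ℝ) ^ q := div_nonneg (by linarith) (by positivity)
  have sub : {x | x ∈ Set.Ioc ((c:ℝ) / (b:ℝ) ^ q) ((d:ℝ) / (b:ℝ) ^ q) ∧
      h * u < F (q + e) L ((a : ℝ) / (b : ℝ) ^ h) (((a : ℝ) + 1) / (b : ℝ) ^ h) (bseq b x)} ⊆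
      ⋃ r ∈ Finset.range h, {x | x ∈ Set.Ioc ((c:ℝ) / (b:ℝ) ^ q) ((d:ℝ) / (b:ℝ) ^ q) ∧
      u ≤ |∑ i ∈ Finset.range ((L - r + h - 1) / h),
        gI (b ^ h) a ((b:ℝ) ^ (q + (e + r) + i * h) * x)|} := by
    rintro x ⟨hx, hu⟩
    by_contra hcon
    simp only [Set.mem_iUnion, Set.mem_ofPred_eq, not_exists, not_and, not_le] at hcon
    rw [F_eq, split_sum h L hh] at hu
    have h1 : |∑ r ∈ Finset.range h, ∑ i ∈ Finset.range ((L - r + h - 1) / h),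
        gI (b ^ h) a ((b:ℝ) ^ (q + e + (r + i * h)) * x)| ≤ ∑ r ∈ Finset.range h, u := by
      refine (Finset.abs_sum_le_sum_abs _ _).trans (Finset.sum_le_sum fun r hr => ?_)
      have := (hcon r hr hx).le
      have e0 : ∀ i, q + e + (r + i * h) = q + (e + r) + i * h := fun i => by ring
      simp only [e0]
      exact this
    rw [Finset.sum_const, Finset.card_range, nsmul_eq_mul] at h1
    linarith
  refine (measure_mono sub).trans ((measure_biUnion_finset_le _ _).trans ?_)
  have each : ∀ r ∈ Finset.range h, volume {x | x ∈ Set.Ioc ((c:ℝ) / (b:ℝ) ^ q) ((d:ℝ) / (b:ℝ) ^ q) ∧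
      u ≤ |∑ i ∈ Finset.range ((L - r + h - 1) / h),
        gI (b ^ h) a ((b:ℝ) ^ (q + (e + r) + i * h) * x)|} ≤
      ENNReal.ofReal (2 * (((d:ℝ) - c) / (b:ℝ) ^ q *
        Real.exp (κ * (t ^ 2 / (b:ℝ) ^ h) - t * u))) := by
    intro r hr
    refine (tail_bound b h a q (e + r) _ hb ha c d hcd t ht0 ht u).trans ?_
    apply ENNReal.ofReal_le_ofReal
    have hK : (((L - r + h - 1) / h : ℕ) : ℝ) ≤ κ := by
      refine le_trans ?_ hκ
      refine Nat.cast_div_le.trans ?_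
      rw [← div_self hh0.ne', ← add_div]
      gcongr
      exact_mod_cast (by omega : L - r + h - 1 ≤ L + h)
    gcongr
  refine (Finset.sum_le_card_nsmul _ _ _ each).trans ?_
  rw [Finset.card_range, nsmul_eq_mul, ENNReal.ofReal_mul hh0.le, ENNReal.ofReal_natCast]

lemma num1 (h : ℕ) : 7 * (h ^ 4 * (4 + 3 * h)) ≤ 4230 * 2 ^ h := by
  by_cases hh : h < 10
  · interval_cases h <;> norm_num
  · push Not at hh
    induction h, hh using Nat.le_induction with
    | base => norm_num
    | succ n hn ih =>
      have : (n + 1) ^ 4 * (4 + 3 * (n + 1)) ≤ 2 * (n ^ 4 * (4 + 3 * n)) := by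
        obtain ⟨m, rfl⟩ := Nat.exists_eq_add_of_le hn
        ring_nf
        nlinarith [sq_nonneg m, Nat.zero_le (m^3), Nat.zero_le (m^4), Nat.zero_le (m^5), Nat.zero_le (m^2)]
      rw [pow_succ 2]
      omega

lemma num2 (l : ℕ) (hl : 38 ≤ l) : 324 * l ^ 2 * (l + 1) ^ 5 ≤ 1058 * 2 ^ l := by
  induction l, hl using Nat.le_induction with
  | base => norm_num
  | succ n hn ih =>
    have : (n + 1) ^ 2 * (n + 1 + 1) ^ 5 ≤ 2 * (n ^ 2 * (n + 1) ^ 5) := by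
      obtain ⟨m, rfl⟩ := Nat.exists_eq_add_of_le hn
      ring_nf
      nlinarith [Nat.zero_le (m^3), Nat.zero_le (m^4), Nat.zero_le (m^5), Nat.zero_le (m^2),
        Nat.zero_le (m^6), Nat.zero_le (m^7)]
    rw [pow_succ 2]
    nlinarith

lemma num3 (b h s : ℝ) (hb : 2 ≤ b) (hh : 1 ≤ h) (hs : 1 ≤ s) :
    b + 2 * h + 2 * s + h * (b - 1) ≤ s * (b / 2 * (4 + 3 * h)) := by
  have hbh : 0 ≤ (b - 2) * h := mul_nonneg (by linarith) (by linarith)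
  have x2 : (b + 2 * h + h * (b - 1)) + 2 ≤ b / 2 * (4 + 3 * h) := by linarith
  have x0 : 0 ≤ b + 2 * h + h * (b - 1) := by linarith
  have x1 : 0 ≤ (s - 1) * (b + 2 * h + h * (b - 1)) := mul_nonneg (by linarith) x0
  have x3 := mul_le_mul_of_nonneg_left x2 (by linarith : 0 ≤ s)
  linarith

/-- main numerical estimate -/
lemma num_main (b h l s : ℕ) (hb : 2 ≤ b) (hh : 1 ≤ h) (hl : 38 ≤ l) (hs : 1 ≤ s)
    (hsl : s ≤ l + 1) (hbl : b ≤ 3 * l) (hhl : h ≤ l + 1)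
    (hlog : h * Real.log b ≤ l * Real.log 2 + Real.log b)
    (u : ℝ) (hu0 : 0 ≤ u) (hu : u ^ 2 = 2116 * 2 ^ (l - 1) * s / h ^ 5) :
    ∃ t : ℝ, 0 ≤ t ∧ t ≤ 1 ∧
      Real.exp ((5 * 2 ^ (l - 1) / (4 * h)) * (t ^ 2 / (b:ℝ) ^ h) - t * u) ≤
        (1 / 2) ^ (b + 2 * h + 2 * s) / (b:ℝ) ^ h := by
  have hbR : (2:ℝ) ≤ b := by exact_mod_cast hb
  have hb0 : (0:ℝ) < b := by linarith
  have hhR : (1:ℝ) ≤ h := by exact_mod_cast hh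
  have hh0 : (0:ℝ) < h := by linarith
  have hsR : (1:ℝ) ≤ s := by exact_mod_cast hs
  have hs0 : (0:ℝ) < s := by linarith
  have hL : (0:ℝ) < 2 ^ (l - 1) := by positivity
  have l2 : Real.log 2 ≤ 0.7 := by linarith [Real.log_two_lt_d9]
  have l20 : 0 < Real.log 2 := Real.log_pos (by norm_num)
  have lb0 : 0 < Real.log b := Real.log_pos (by linarith)
  set R : ℝ := Real.log 2 * (b + 2 * h + 2 * s) + h * Real.log b with hR
  have expR : Real.exp (-R) = (1 / 2) ^ (b + 2 * h + 2 * s) / (b:ℝ) ^ h := by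
    rw [hR, neg_add, Real.exp_add, Real.exp_neg, Real.exp_neg, mul_comm (h:ℝ),
      Real.exp_mul (Real.log b), Real.exp_log hb0, Real.exp_mul, Real.exp_log (by norm_num)]
    have : ((b:ℝ) + 2 * h + 2 * s) = ((b + 2 * h + 2 * s : ℕ) : ℝ) := by push_cast; ring
    rw [this, Real.rpow_natCast, Real.rpow_natCast, one_div, inv_pow, div_eq_mul_inv]
  set v : ℝ := (5 * 2 ^ (l - 1) / (4 * h)) / (b:ℝ) ^ h with hv
  have v0 : 0 < v := by positivity
  have form : ∀ t : ℝ, (5 * 2 ^ (l - 1) / (4 * h)) * (t ^ 2 / (b:ℝ) ^ h) - t * u = v * t ^ 2 - t * u := by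
    intro t; rw [hv]; ring
  rw [← expR]
  by_cases hc : u ≤ 2 * v
  · refine ⟨u / (2 * v), by positivity, by rw [div_le_one (by positivity)]; exact hc, ?_⟩
    rw [Real.exp_le_exp, form]
    have e1 : v * (u / (2 * v)) ^ 2 - u / (2 * v) * u = -(u ^ 2 / (4 * v)) := by
      field_simp; ring
    rw [e1, hu, neg_le_neg_iff]
    have e2 : 2116 * 2 ^ (l - 1) * s / (h:ℝ) ^ 5 / (4 * v) = 423.2 * s * ((b:ℝ) ^ h / h ^ 4) := by
      rw [hv]; field_simp; norm_num
    rw [e2]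
    -- lower bound
    have n1 : (7:ℝ) * (h ^ 4 * (4 + 3 * h)) ≤ 4230 * 2 ^ h := by exact_mod_cast num1 h
    have n2 : (b:ℝ) / 2 * 2 ^ h ≤ (b:ℝ) ^ h := by
      obtain ⟨g, rfl⟩ := Nat.exists_eq_add_of_le hh
      rw [add_comm 1 g, pow_succ, pow_succ]
      have : (2:ℝ) ^ g ≤ (b:ℝ) ^ g := pow_le_pow_left₀ (by norm_num) hbR g
      nlinarith
    have n3 : 0.7 * ((b:ℝ) / 2 * (4 + 3 * h)) ≤ 423.2 * ((b:ℝ) ^ h / h ^ 4) := by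
      rw [mul_div_assoc', le_div_iff₀ (by positivity)]
      have := mul_le_mul_of_nonneg_left n1 (by positivity : 0 ≤ (b:ℝ) / 2)
      have p0 : 0 < (b:ℝ) ^ h := by positivity
      calc 0.7 * ((b:ℝ) / 2 * (4 + 3 * h)) * (h:ℝ) ^ 4
          = (b:ℝ) / 2 * (7 * (h ^ 4 * (4 + 3 * h))) / 10 := by ring
        _ ≤ (b:ℝ) / 2 * (4230 * 2 ^ h) / 10 := by linarith
        _ = 423 * ((b:ℝ) / 2 * 2 ^ h) := by ring
        _ ≤ 423 * (b:ℝ) ^ h := by linarith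
        _ ≤ _ := by linarith
    have n4 : Real.log b ≤ Real.log 2 * (b - 1) := by
      have hle : b ≤ 2 ^ (b - 1) := by
        have := Nat.lt_two_pow_self (n := b - 1); omega
      have : (b:ℝ) ≤ 2 ^ (b - 1) := by exact_mod_cast hle
      have h5 := Real.log_le_log hb0 this
      rw [Real.log_pow, Nat.cast_sub (by omega)] at h5
      push_cast at h5
      linarith
    have n5 : R ≤ s * (0.7 * ((b:ℝ) / 2 * (4 + 3 * h))) := by
      have r1 : R ≤ Real.log 2 * (b + 2 * h + 2 * s + h * (b - 1)) := by
        have := mul_le_mul_of_nonneg_left n4 hh0.le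
        rw [hR]; linarith
      have r2 : ((b:ℝ) + 2 * h + 2 * s + h * (b - 1)) ≤ s * ((b:ℝ) / 2 * (4 + 3 * h)) := by
        exact num3 b h s hbR hhR hsR
      have r3 : 0 ≤ s * ((b:ℝ) / 2 * (4 + 3 * h)) := by positivity
      calc R ≤ _ := r1
        _ ≤ Real.log 2 * (s * ((b:ℝ) / 2 * (4 + 3 * h))) := by gcongr
        _ ≤ 0.7 * (s * ((b:ℝ) / 2 * (4 + 3 * h))) := by gcongr
        _ = _ := by ring
    calc R ≤ _ := n5
      _ ≤ s * (423.2 * ((b:ℝ) ^ h / h ^ 4)) := by gcongr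
      _ = _ := by ring
  · push Not at hc
    refine ⟨1, by norm_num, le_rfl, ?_⟩
    rw [Real.exp_le_exp, form]
    suffices 2 * R ≤ u by linarith
    have hlR : (38:ℝ) ≤ l := by exact_mod_cast hl
    have hsl' : (s:ℝ) ≤ l + 1 := by exact_mod_cast hsl
    have hbl' : (b:ℝ) ≤ 3 * l := by exact_mod_cast hbl
    have hhl' : (h:ℝ) ≤ l + 1 := by exact_mod_cast hhl
    have R0 : 0 ≤ R := by positivity
    have R1 : R ≤ 9 * l := by
      have := Real.log_le_sub_one_of_pos hb0
      have r1 : Real.log 2 * (b + 2 * h + 2 * s) ≤ 0.7 * (b + 2 * h + 2 * s) := by gcongr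
      have r2 : (l:ℝ) * Real.log 2 ≤ l * 0.7 := by gcongr
      rw [hR]
      linarith
    refine le_of_sq_le_sq ?_ hu0
    rw [hu, le_div_iff₀ (by positivity)]
    have n2 : (324:ℝ) * l ^ 2 * (l + 1) ^ 5 ≤ 1058 * 2 ^ l := by exact_mod_cast num2 l hl
    have p2 : (2:ℝ) ^ l = 2 * 2 ^ (l - 1) := by
      rw [← pow_succ']; congr 1; omega
    calc (2 * R) ^ 2 * (h:ℝ) ^ 5 ≤ (2 * (9 * l)) ^ 2 * ((l:ℝ) + 1) ^ 5 := by gcongr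
      _ = (324:ℝ) * l ^ 2 * (l + 1) ^ 5 := by ring
      _ ≤ (1058:ℝ) * 2 ^ l := n2
      _ = (2116:ℝ) * 2 ^ (l - 1) * 1 := by rw [p2]; ring
      _ ≤ _ := by gcongr

lemma D_lower (k b : ℕ) (hk : 100 ≤ k) (hb : 2 ≤ b) (hbk : b ≤ k) :
    (2:ℝ) ^ (3 * k / 4) ≤ (Nkb b (k + 1) : ℝ) - Nkb b k - 4 * k := by
  have hbR : (2:ℝ) ≤ b := by exact_mod_cast hb
  have lb0 : 0 < Real.log b := Real.log_pos (by linarith)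
  have l20 : 0 < Real.log 2 := Real.log_pos (by norm_num)
  have hk0 : (0:ℝ) < k := by exact_mod_cast (by omega : 0 < k)
  have h1 : (2:ℝ) ^ (k + 1) * Real.log 2 / Real.log b ≤ Nkb b (k + 1) := Nat.le_ceil _
  have h2 : (Nkb b k : ℝ) < (2:ℝ) ^ k * Real.log 2 / Real.log b + 1 :=
    Nat.ceil_lt_add_one (by positivity)
  have h3 : (2:ℝ) ^ (k + 1) * Real.log 2 / Real.log b = 2 * ((2:ℝ) ^ k * Real.log 2 / Real.log b) := by
    rw [pow_succ]; ring
  have h4 : Real.log b ≤ k * Real.log 2 := by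
    rw [← Real.log_pow]
    apply Real.log_le_log (by linarith)
    exact_mod_cast hbk.trans Nat.lt_two_pow_self.le
  have h5 : (2:ℝ) ^ k / k ≤ (2:ℝ) ^ k * Real.log 2 / Real.log b := by
    rw [div_le_div_iff₀ hk0 lb0]
    have : 0 < (2:ℝ) ^ k := by positivity
    nlinarith
  have h6 : 2 * k ≤ 2 ^ (k - 3 * k / 4) := by
    obtain ⟨j, hj⟩ : ∃ j, k - 3 * k / 4 = j + 5 := ⟨k - 3 * k / 4 - 5, by omega⟩
    have := Nat.lt_two_pow_self (n := j)
    rw [hj, pow_add]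
    omega
  have h7 : 4 * k + 1 ≤ 2 ^ (3 * k / 4) := by
    obtain ⟨j, hj⟩ : ∃ j, 3 * k / 4 = j + 5 := ⟨3 * k / 4 - 5, by omega⟩
    have := Nat.lt_two_pow_self (n := j)
    rw [hj, pow_add]
    omega
  have h8 : 2 * (2:ℝ) ^ (3 * k / 4) ≤ (2:ℝ) ^ k / k := by
    rw [le_div_iff₀ hk0]
    have e : (2:ℝ) ^ k = 2 ^ (3 * k / 4) * 2 ^ (k - 3 * k / 4) := by
      rw [← pow_add]; congr 1; omega
    have h6R : 2 * (k:ℝ) ≤ 2 ^ (k - 3 * k / 4) := by exact_mod_cast h6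
    have : 0 < (2:ℝ) ^ (3 * k / 4) := by positivity
    rw [e]
    nlinarith
  have h7R : 4 * (k:ℝ) + 1 ≤ 2 ^ (3 * k / 4) := by exact_mod_cast h7
  linarith

lemma D_upper (k b : ℕ) (hk : 100 ≤ k) (hb : 2 ≤ b) (hbk : b ≤ k) :
    (Nkb b (k + 1) : ℝ) - Nkb b k - 4 * k ≤ 2 ^ nkb b k := by
  have hD := D_lower k b hk hb hbk
  have hD0 : 0 < (Nkb b (k + 1) : ℝ) - Nkb b k - 4 * k := lt_of_lt_of_le (by positivity) hD
  have h1 : Real.logb 2 ((Nkb b (k + 1) : ℝ) - Nkb b k - 4 * k) ≤ nkb b k := Nat.le_ceil _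
  rw [Real.logb_le_iff_le_rpow (by norm_num) hD0, Real.rpow_natCast] at h1
  exact h1

lemma nkb_lower (k b : ℕ) (hk : 100 ≤ k) (hb : 2 ≤ b) (hbk : b ≤ k) : 3 * k / 4 ≤ nkb b k := by
  have := (D_lower k b hk hb hbk).trans (D_upper k b hk hb hbk)
  exact (pow_le_pow_iff_right₀ (by norm_num : (1:ℝ) < 2)).1 this

lemma h_facts (k b h l : ℕ) (hb : 2 ≤ b) (hT : h ≤ Tbk b k) (hl : nkb b k ≤ 2 * l) :
    h * Real.log b ≤ l * Real.log 2 + Real.log b ∧ h ≤ l + 1 := by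
  have hbR : (2:ℝ) ≤ b := by exact_mod_cast hb
  have lb0 : 0 < Real.log b := Real.log_pos (by linarith)
  have l20 : 0 < Real.log 2 := Real.log_pos (by norm_num)
  have lb2 : Real.log 2 ≤ Real.log b := Real.log_le_log (by norm_num) hbR
  have hlR : (nkb b k : ℝ) ≤ 2 * l := by exact_mod_cast hl
  have h1 : (h:ℝ) < (nkb b k : ℝ) * Real.log 2 / (2 * Real.log b) + 1 :=
    lt_of_le_of_lt (by exact_mod_cast hT) (Nat.ceil_lt_add_one (by positivity))
  have h2 : (nkb b k : ℝ) * Real.log 2 / (2 * Real.log b) ≤ l * Real.log 2 / Real.log b := by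
    rw [div_le_div_iff₀ (by positivity) lb0]
    have : 0 < Real.log 2 * Real.log b := by positivity
    nlinarith
  constructor
  · have h3 : (h:ℝ) ≤ l * Real.log 2 / Real.log b + 1 := by linarith
    have := mul_le_mul_of_nonneg_right h3 lb0.le
    rwa [add_mul, div_mul_cancel₀ _ lb0.ne', one_mul] at this
  · have h4 : (l:ℝ) * Real.log 2 / Real.log b ≤ l := by
      rw [div_le_iff₀ lb0]; gcongr
    have : (h:ℝ) < l + 1 := by linarith
    exact (by exact_mod_cast this : h < l + 1).le

lemma piece_bound (k b : ℕ) (hk : 100 ≤ k) (hb : 2 ≤ b) (hbk : b ≤ k) (c d : ℤ) (hcd : c ≤ d)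
    (h a l m : ℕ) (hh : 1 ≤ h) (hT : h ≤ Tbk b k) (ha : a < b ^ h)
    (hl : nkb b k ≤ 2 * l) (hln : l ≤ nkb b k) :
    volume {x | x ∈ Set.Ioc ((c:ℝ) / (b:ℝ) ^ (Nkb b k + 4 * k)) ((d:ℝ) / (b:ℝ) ^ (Nkb b k + 4 * k)) ∧
      46 * (2 : ℝ) ^ (((l : ℝ) - 1) / 2) * (h : ℝ) ^ (-(3 / 2) : ℝ) *
        Real.sqrt ((nkb b k : ℝ) - l + 1) <
      F (Nkb b k + 4 * k + m * 2 ^ l) (2 ^ (l - 1))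
        ((a : ℝ) / (b : ℝ) ^ h) (((a : ℝ) + 1) / (b : ℝ) ^ h) (bseq b x)} ≤
    ENNReal.ofReal (h * (2 * (((d:ℝ) - c) / (b:ℝ) ^ (Nkb b k + 4 * k) *
        ((1 / 2) ^ (b + 2 * h + 2 * (nkb b k - l + 1)) / (b:ℝ) ^ h)))) := by
  have hn := nkb_lower k b hk hb hbk
  obtain ⟨hlog, hhl⟩ := h_facts k b h l hb hT hl
  have hl38 : 38 ≤ l := by omega
  have hh0 : (0:ℝ) < h := by exact_mod_cast hh
  have hb0 : (0:ℝ) < b := by exact_mod_cast (by omega : 0 < b)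
  have hcdR : (c:ℝ) ≤ d := by exact_mod_cast hcd
  set n := nkb b k with hnd
  set thr : ℝ := 46 * (2 : ℝ) ^ (((l : ℝ) - 1) / 2) * (h : ℝ) ^ (-(3 / 2) : ℝ) *
        Real.sqrt ((n : ℝ) - l + 1) with hthr
  have thr0 : 0 ≤ thr := by positivity
  have scast : ((n - l + 1 : ℕ) : ℝ) = (n:ℝ) - l + 1 := by
    rw [Nat.cast_add, Nat.cast_sub hln]; simp
  have sqthr : (thr / h) ^ 2 = 2116 * 2 ^ (l - 1) * ((n - l + 1 : ℕ) : ℝ) / (h:ℝ) ^ 5 := by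
    have e1 : ((2 : ℝ) ^ (((l : ℝ) - 1) / 2)) ^ 2 = 2 ^ (l - 1) := by
      rw [← Real.rpow_natCast, ← Real.rpow_mul (by norm_num), ← Real.rpow_natCast]
      congr 1
      rw [Nat.cast_sub (by omega)]
      push_cast
      ring
    have e2 : ((h : ℝ) ^ (-(3 / 2) : ℝ)) ^ 2 = ((h:ℝ) ^ 3)⁻¹ := by
      rw [← Real.rpow_natCast, ← Real.rpow_mul hh0.le, ← Real.rpow_natCast, ← Real.rpow_neg hh0.le]
      congr 1
      norm_num
    have e3 : (Real.sqrt ((n : ℝ) - l + 1)) ^ 2 = ((n - l + 1 : ℕ) : ℝ) := by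
      rw [← scast, Real.sq_sqrt (Nat.cast_nonneg _)]
    rw [hthr, div_pow, mul_pow, mul_pow, mul_pow, e1, e2, e3]
    field_simp
    norm_num
  obtain ⟨t, t0, t1, ht⟩ := num_main b h l (n - l + 1) hb hh hl38 (by omega) (by omega) (by omega)
    hhl hlog (thr / h) (by positivity) sqthr
  have hκ : ((2 ^ (l - 1) : ℕ) : ℝ) / h + 1 ≤ 5 * 2 ^ (l - 1) / (4 * h) := by
    have h4 : 4 * h ≤ 2 ^ (l - 1) := by
      obtain ⟨j, hj⟩ : ∃ j, l - 1 = j + 5 := ⟨l - 6, by omega⟩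
      have := Nat.lt_two_pow_self (n := j)
      rw [hj, pow_add]
      omega
    have h4R : 4 * (h:ℝ) ≤ 2 ^ (l - 1) := by exact_mod_cast h4
    push_cast
    rw [div_add_one hh0.ne', div_le_div_iff₀ hh0 (by positivity)]
    nlinarith
  have := piece b h a (Nkb b k + 4 * k) (m * 2 ^ l) (2 ^ (l - 1)) hh hb ha c d hcd t t0 t1 (thr / h) _ hκ
  rw [mul_div_cancel₀ _ hh0.ne'] at this
  refine this.trans (ENNReal.ofReal_le_ofReal ?_)
  have hnn : 0 ≤ ((d:ℝ) - c) / (b:ℝ) ^ (Nkb b k + 4 * k) := div_nonneg (by linarith) (by positivity)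
  gcongr

lemma geo_l (n : ℕ) (s : Finset ℕ) (hs : ∀ l ∈ s, l ≤ n) :
    ∑ l ∈ s, ((1:ℝ) / 2) ^ (n - l) ≤ 2 := by
  calc ∑ l ∈ s, ((1:ℝ) / 2) ^ (n - l) ≤ ∑ l ∈ Finset.range (n + 1), ((1:ℝ) / 2) ^ (n - l) := by
        refine Finset.sum_le_sum_of_subset_of_nonneg (fun l hl => ?_) fun _ _ _ => by positivity
        have := hs l hl
        simp; omega
    _ = ∑ l ∈ Finset.range (n + 1), ((1:ℝ) / 2) ^ l := by
        rw [← Finset.sum_range_reflect]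
        refine Finset.sum_congr rfl fun l hl => ?_
        have := Finset.mem_range.1 hl
        congr 1
        omega
    _ ≤ 2 := by
        rw [geom_sum_eq (by norm_num)]
        have : (0:ℝ) ≤ (1 / 2) ^ (n + 1) := by positivity
        rw [div_le_iff_of_neg (by norm_num)]
        linarith

lemma geo_h (T : ℕ) : ∑ h ∈ Finset.Icc 1 T, (h:ℝ) * (1 / 4) ^ h ≤ 1 / 2 := by
  have : ∀ T : ℕ, ∑ h ∈ Finset.Icc 1 T, (h:ℝ) * (1 / 4) ^ h ≤ 1 / 2 - (1 / 2) * (1 / 2) ^ T := by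
    intro T
    induction T with
    | zero => simp
    | succ T ih =>
      rw [Finset.sum_Icc_succ_top (by omega)]
      have h1 : ((T + 1 : ℕ) : ℝ) ≤ 2 ^ T := by exact_mod_cast Nat.lt_two_pow_self
      have h2 : ((T + 1 : ℕ) : ℝ) * (1 / 4) ^ (T + 1) ≤ 2 ^ T * (1 / 4) ^ (T + 1) := by gcongr
      have h3 : (2:ℝ) ^ T * (1 / 4) ^ (T + 1) = (1 / 4) * (1 / 2) ^ T := by
        rw [pow_succ, ← mul_assoc, ← mul_pow]; norm_num; ring
      rw [pow_succ (1 / 2 : ℝ)]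
      linarith
  have h0 : (0:ℝ) ≤ (1 / 2) ^ T := by positivity
  linarith [this T]

lemma total_bound (k b : ℕ) (hk : 100 ≤ k) (hb : 2 ≤ b) (hbk : b ≤ k) (c d : ℤ) (hcd : c ≤ d)
    (A : Set ℝ)
    (hA : A ⊆ Set.Ioc ((c:ℝ) / (b:ℝ) ^ (Nkb b k + 4 * k)) ((d:ℝ) / (b:ℝ) ^ (Nkb b k + 4 * k))) :
    volume (Hset b k A) ≤
      ENNReal.ofReal ((1 / 2) ^ b * (((d:ℝ) - c) / (b:ℝ) ^ (Nkb b k + 4 * k) / 2)) := by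
  have hb0 : (0:ℝ) < b := by exact_mod_cast (by omega : 0 < b)
  have hcdR : (c:ℝ) ≤ d := by exact_mod_cast hcd
  set n := nkb b k with hnd
  set ε : ℝ := ((d:ℝ) - c) / (b:ℝ) ^ (Nkb b k + 4 * k) with hε
  have hnn : 0 ≤ ε := div_nonneg (by linarith) (by positivity)
  set S : Finset ℕ := (Finset.range (n + 1)).filter fun l => n ≤ 2 * l with hS
  set P : ℕ → ℕ → ℕ → ℕ → Set ℝ := fun h a l m =>
    {x | x ∈ Set.Ioc ((c:ℝ) / (b:ℝ) ^ (Nkb b k + 4 * k)) ((d:ℝ) / (b:ℝ) ^ (Nkb b k + 4 * k)) ∧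
      46 * (2 : ℝ) ^ (((l : ℝ) - 1) / 2) * (h : ℝ) ^ (-(3 / 2) : ℝ) *
        Real.sqrt ((n : ℝ) - l + 1) <
      F (Nkb b k + 4 * k + m * 2 ^ l) (2 ^ (l - 1))
        ((a : ℝ) / (b : ℝ) ^ h) (((a : ℝ) + 1) / (b : ℝ) ^ h) (bseq b x)} with hP
  set w : ℕ → ℕ → ℝ := fun h l =>
    h * (2 * (ε * ((1 / 2) ^ (b + 2 * h + 2 * (n - l + 1)) / (b:ℝ) ^ h))) with hw
  have w0 : ∀ h l, 0 ≤ w h l := fun h l => by simp only [hw]; positivity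
  have sub : Hset b k A ⊆ ⋃ h ∈ Finset.Icc 1 (Tbk b k), ⋃ a ∈ Finset.range (b ^ h), ⋃ l ∈ S,
      ⋃ m ∈ Finset.range (2 ^ (n - l)), P h a l m := by
    intro x hx
    simp only [Hset, Set.mem_iUnion] at hx
    obtain ⟨h, h1, hT, a, ha, l, hl, hln, m, hm, hxA, hxF⟩ := hx
    simp only [Set.mem_iUnion]
    refine ⟨h, Finset.mem_Icc.2 ⟨h1, hT⟩, a, Finset.mem_range.2 ha, l, ?_, m, ?_, hA hxA, hxF⟩
    · simp only [hS, Finset.mem_filter, Finset.mem_range]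
      exact ⟨by omega, hl⟩
    · rw [Finset.mem_range]
      have hD := D_upper k b hk hb hbk
      have hD2 : Nkb b (k + 1) ≤ 2 ^ n + Nkb b k + 4 * k := by
        have : (Nkb b (k + 1) : ℝ) ≤ 2 ^ n + Nkb b k + 4 * k := by linarith
        exact_mod_cast this
      have hp : 0 < 2 ^ (l - 1) := by positivity
      have h3 : m * 2 ^ l < 2 ^ n := by omega
      rw [show n = (n - l) + l by omega, pow_add] at h3
      exact lt_of_mul_lt_mul_right h3 (Nat.zero_le _)
  have step : volume (Hset b k A) ≤ ∑ h ∈ Finset.Icc 1 (Tbk b k), ∑ a ∈ Finset.range (b ^ h),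
      ∑ l ∈ S, ∑ m ∈ Finset.range (2 ^ (n - l)), ENNReal.ofReal (w h l) := by
    refine (measure_mono sub).trans ?_
    refine (measure_biUnion_finset_le _ _).trans (Finset.sum_le_sum fun h hh => ?_)
    refine (measure_biUnion_finset_le _ _).trans (Finset.sum_le_sum fun a ha => ?_)
    refine (measure_biUnion_finset_le _ _).trans (Finset.sum_le_sum fun l hl => ?_)
    refine (measure_biUnion_finset_le _ _).trans (Finset.sum_le_sum fun m hm => ?_)
    rw [Finset.mem_Icc] at hh
    rw [Finset.mem_range] at ha
    simp only [hS, Finset.mem_filter, Finset.mem_range] at hl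
    exact piece_bound k b hk hb hbk c d hcd h a l m hh.1 hh.2 ha hl.2 (by omega)
  have conv : ∑ h ∈ Finset.Icc 1 (Tbk b k), ∑ a ∈ Finset.range (b ^ h),
      ∑ l ∈ S, ∑ m ∈ Finset.range (2 ^ (n - l)), ENNReal.ofReal (w h l) =
      ENNReal.ofReal (∑ h ∈ Finset.Icc 1 (Tbk b k), ∑ a ∈ Finset.range (b ^ h),
      ∑ l ∈ S, ∑ m ∈ Finset.range (2 ^ (n - l)), w h l) := by
    rw [ENNReal.ofReal_sum_of_nonneg]
    · refine Finset.sum_congr rfl fun h _ => ?_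
      rw [ENNReal.ofReal_sum_of_nonneg]
      · refine Finset.sum_congr rfl fun a _ => ?_
        rw [ENNReal.ofReal_sum_of_nonneg]
        · refine Finset.sum_congr rfl fun l _ => ?_
          rw [ENNReal.ofReal_sum_of_nonneg]
          exact fun _ _ => w0 _ _
        · exact fun _ _ => Finset.sum_nonneg fun _ _ => w0 _ _
      · exact fun _ _ => Finset.sum_nonneg fun _ _ => Finset.sum_nonneg fun _ _ => w0 _ _
    · exact fun _ _ => Finset.sum_nonneg fun _ _ => Finset.sum_nonneg fun _ _ =>
        Finset.sum_nonneg fun _ _ => w0 _ _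
  rw [conv] at step
  refine step.trans (ENNReal.ofReal_le_ofReal ?_)
  have inner : ∀ h l : ℕ, (b:ℝ) ^ h * ((2:ℝ) ^ (n - l) * w h l) =
      ε * (1 / 2) ^ b * (1 / 2) * ((h:ℝ) * (1 / 4) ^ h) * (1 / 2) ^ (n - l) := by
    intro h l
    simp only [hw]
    have e : ((1:ℝ) / 2) ^ (b + 2 * h + 2 * (n - l + 1)) =
        (1 / 2) ^ b * (1 / 4) ^ h * ((1 / 2) ^ (n - l) * (1 / 2) ^ (n - l) * (1 / 4)) := by
      rw [pow_add, pow_add, pow_mul, two_mul (n - l + 1), pow_add, pow_succ]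
      norm_num
      ring
    have e2 : (2:ℝ) ^ (n - l) * (1 / 2) ^ (n - l) = 1 := by rw [← mul_pow]; norm_num
    have e3 : (b:ℝ) ^ h * ((b:ℝ) ^ h)⁻¹ = 1 := mul_inv_cancel₀ (by positivity)
    rw [e]
    calc _ = ((b:ℝ) ^ h * ((b:ℝ) ^ h)⁻¹) * ((2:ℝ) ^ (n - l) * (1 / 2) ^ (n - l)) *
        (ε * (1 / 2) ^ b * (1 / 2) * ((h:ℝ) * (1 / 4) ^ h) * (1 / 2) ^ (n - l)) := by ring
      _ = _ := by rw [e2, e3]; ring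
  have tot : ∑ h ∈ Finset.Icc 1 (Tbk b k), ∑ a ∈ Finset.range (b ^ h),
      ∑ l ∈ S, ∑ m ∈ Finset.range (2 ^ (n - l)), w h l =
      ε * (1 / 2) ^ b * (1 / 2) * (∑ h ∈ Finset.Icc 1 (Tbk b k), ((h:ℝ) * (1 / 4) ^ h)) *
        ∑ l ∈ S, (1 / 2) ^ (n - l) := by
    simp only [Finset.sum_const, Finset.card_range, nsmul_eq_mul]
    push_cast
    simp only [Finset.mul_sum, Finset.sum_mul, inner]
    rw [Finset.sum_comm]
  rw [tot]
  have g1 := geo_h (Tbk b k)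
  have g2 := geo_l n S (fun l hl => by
    simp only [hS, Finset.mem_filter, Finset.mem_range] at hl; omega)
  have g3 : 0 ≤ ∑ l ∈ S, ((1:ℝ) / 2) ^ (n - l) := Finset.sum_nonneg fun _ _ => by positivity
  calc _ ≤ ε * (1 / 2) ^ b * (1 / 2) * (1 / 2) * 2 := by gcongr
    _ = _ := by ring

lemma Q_lower (k b : ℕ) (hb : 2 ≤ b) :
    (2:ℝ) ^ (2 ^ k + 4 * k) ≤ (b:ℝ) ^ (Nkb b k + 4 * k) := by
  have hbR : (2:ℝ) ≤ b := by exact_mod_cast hb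
  have lb0 : 0 < Real.log b := Real.log_pos (by linarith)
  have h1 : (2:ℝ) ^ k * Real.log 2 / Real.log b ≤ Nkb b k := Nat.le_ceil _
  rw [div_le_iff₀ lb0] at h1
  have h2 : (2:ℝ) ^ (2 ^ k) ≤ (b:ℝ) ^ (Nkb b k) := by
    rw [← Real.log_le_log_iff (by positivity) (by positivity), Real.log_pow, Real.log_pow]
    push_cast
    exact h1
  rw [pow_add, pow_add]
  gcongr

theorem stmt11 (k b : ℕ) (hk : 100 ≤ k) (hb : 2 ≤ b) (hbk : b ≤ k)
    (A : Set ℝ) (hA : A ⊆ Set.Icc (0 : ℝ) 1) (hA' : A.OrdConnected)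
    (hμ : (2⁻¹ : ENNReal) ^ (2 ^ k + k) ≤ MeasureTheory.volume A) :
    MeasureTheory.volume (Hset b k A) ≤ (2⁻¹ : ENNReal) ^ b * MeasureTheory.volume A := by
  have hb0 : (0:ℝ) < b := by exact_mod_cast (by omega : 0 < b)
  have hne : A.Nonempty := by
    rw [Set.nonempty_iff_ne_empty]
    rintro rfl
    rw [measure_empty, nonpos_iff_eq_zero] at hμ
    exact (pow_ne_zero _ (by simp)) hμ
  have hbb : BddBelow A := bddBelow_Icc.mono hA
  have hba : BddAbove A := bddAbove_Icc.mono hA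
  set p := sInf A with hp
  set r := sSup A with hr
  have sub1 : A ⊆ Set.Icc p r := fun x hx => ⟨csInf_le hbb hx, le_csSup hba hx⟩
  have sub2 : Set.Ioo p r ⊆ A := by
    intro x hx
    obtain ⟨y, hy, hyx⟩ := exists_lt_of_csInf_lt hne hx.1
    obtain ⟨z, hz, hxz⟩ := exists_lt_of_lt_csSup hne hx.2
    exact hA'.out hy hz ⟨hyx.le, hxz.le⟩
  have vol : volume A = ENNReal.ofReal (r - p) := by
    apply le_antisymm
    · exact (measure_mono sub1).trans_eq Real.volume_Icc
    · exact Real.volume_Ioo.symm.trans_le (measure_mono sub2)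
  have hpr : p ≤ r := by
    obtain ⟨x, hx⟩ := hne
    exact (sub1 hx).1.trans (sub1 hx).2
  set Q : ℝ := (b:ℝ) ^ (Nkb b k + 4 * k) with hQ
  have Q0 : 0 < Q := by positivity
  have hmu : (1 / 2 : ℝ) ^ (2 ^ k + k) ≤ r - p := by
    rw [vol] at hμ
    have e : (2⁻¹ : ENNReal) ^ (2 ^ k + k) = ENNReal.ofReal ((1 / 2 : ℝ) ^ (2 ^ k + k)) := by
      rw [ENNReal.ofReal_pow (by norm_num), one_div, ENNReal.ofReal_inv_of_pos (by norm_num)]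
      norm_num
    rw [e] at hμ
    exact (ENNReal.ofReal_le_ofReal_iff (by linarith)).1 hμ
  have hQ2 : 2 / Q ≤ r - p := by
    refine le_trans ?_ hmu
    have h1 := Q_lower k b hb
    rw [← hQ] at h1
    have h2 : (2:ℝ) * 2 ^ (2 ^ k + k) ≤ Q := by
      refine le_trans ?_ h1
      rw [← pow_succ']
      exact pow_le_pow_right₀ (by norm_num) (by omega)
    rw [one_div, inv_pow, div_le_iff₀ Q0, ← div_eq_inv_mul, le_div_iff₀ (by positivity)]
    exact h2
  set c : ℤ := ⌈Q * p⌉ - 1 with hc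
  set d : ℤ := ⌈Q * r⌉ with hd
  have c1 : (c:ℝ) < Q * p := by
    rw [hc]; push_cast; linarith [Int.ceil_lt_add_one (Q * p)]
  have c2 : Q * p - 1 ≤ (c:ℝ) := by
    rw [hc]; push_cast; linarith [Int.le_ceil (Q * p)]
  have d1 : Q * r ≤ (d:ℝ) := Int.le_ceil _
  have d2 : (d:ℝ) < Q * r + 1 := Int.ceil_lt_add_one _
  have hcd : c ≤ d := by
    have : (c:ℝ) ≤ d := by
      have := mul_le_mul_of_nonneg_left hpr Q0.le
      linarith
    exact_mod_cast this
  have tb := total_bound k b hk hb hbk c d hcd A (by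
    intro x hx
    have := sub1 hx
    rw [← hQ]
    constructor
    · rw [div_lt_iff₀ Q0]
      have := mul_le_mul_of_nonneg_left this.1 Q0.le
      linarith
    · rw [le_div_iff₀ Q0]
      have := mul_le_mul_of_nonneg_left this.2 Q0.le
      linarith)
  rw [← hQ] at tb
  refine tb.trans ?_
  rw [vol]
  have e : (2⁻¹ : ENNReal) ^ b = ENNReal.ofReal ((1 / 2 : ℝ) ^ b) := by
    rw [ENNReal.ofReal_pow (by norm_num), one_div, ENNReal.ofReal_inv_of_pos (by norm_num)]
    norm_num
  rw [e, ← ENNReal.ofReal_mul (by positivity)]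
  apply ENNReal.ofReal_le_ofReal
  have len : ((d:ℝ) - c) / Q ≤ (r - p) + 2 / Q := by
    rw [div_le_iff₀ Q0, add_mul, div_mul_cancel₀ _ Q0.ne']
    linarith
  gcongr
  linarith
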